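/- Let F be a field of characteristic 0 and L a finite-dimensional pluperfect Lie algebra over F. Then L is inertially generated: L admits an F-basis consisting of inertial elements. -/

import Mathlib

/-- A Lie algebra `L` over a field `F` is *toral* if for every `x ∈ L` the adjoint
endomorphism `ad x : L → L`, `y ↦ ⁅x, y⁆`, is semisimple, i.e. every `ad x`-invariant
`F`-subspace of `L` has an `ad x`-invariant complement. -/
def IsToral (F L : Type*) [Field F] [LieRing L] [LieAlgebra F L] : Prop :=
  ∀ x : L, ∀ p : Submodule F L, (∀ y ∈ p, ⁅x, y⁆ ∈ p) →
    ∃ q : Submodule F L, (∀ y ∈ q, ⁅x, y⁆ ∈ q) ∧ IsCompl p q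

/-- A Lie algebra `L` is *pluperfect* if every toral quotient of `L` is trivial:
for every Lie ideal `I` with `L ⧸ I` toral, one has `I = ⊤`. -/
def IsPluperfect (F L : Type*) [Field F] [LieRing L] [LieAlgebra F L] : Prop :=
  ∀ I : LieIdeal F L, IsToral F (L ⧸ I) → I = ⊤

/-- A nonzero element `y` of a Lie algebra `L` over `F` is *inertial* if there are
`x ∈ L` and a nonzero scalar `c ∈ F` with `⁅x, y⁆ = c • y`. -/
def IsInertial (F : Type*) {L : Type*} [Field F] [LieRing L] [LieAlgebra F L] (y : L) :
    Prop :=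
  y ≠ 0 ∧ ∃ (x : L) (c : F), c ≠ 0 ∧ ⁅x, y⁆ = c • y

/-- A Lie algebra is *inertially generated* if it admits an `F`-basis all of whose
elements are inertial. -/
def InertiallyGenerated (F L : Type*) [Field F] [LieRing L] [LieAlgebra F L] : Prop :=
  ∃ (n : ℕ) (b : Module.Basis (Fin n) F L), ∀ i, IsInertial F (b i)

/-! An inertial element `y` is `ad`-nilpotent, and the automorphisms `exp (t • ad y)` permute the
inertial elements, so the inertial elements span a Lie subalgebra `U`. If `e, h, f` satisfy the
`sl₂` relations, then `ad h` is diagonalizable, and the subalgebra generated by its eigenvectors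
with nonzero eigenvalue is an ideal containing `e` and contained in `U`. It remains to show that
every proper ideal `I` misses such an `e`, for then the largest ideal inside `U` is everything.

A pluperfect `L` is perfect, so `I` has proper image in the semisimple algebra `S = L / rad L`. A
proper ideal of `S` misses some `ad`-nilpotent element: otherwise, by the Jordan decomposition in
`S`, the quotient by it would be toral. By Jacobson and Morozov that element starts an `sl₂` triple
of `S`, which lifts to `L` through the successive abelian quotients of the derived series of
`rad L`. Lifting through one such layer `A` is linear algebra: an error term in `A` has to be
removed, using the structure of the action on `A` of the triple modulo `A`. -/

/-- `IsMorozovPair e f` says that `⁅e, f⁆` scales `e` by `2`. The triple `e, ⁅e, f⁆, f` satisfies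
the `sl₂` relations exactly when both `(e, f)` and `(f, e)` are Morozov pairs; unlike for
`IsSl2Triple`, it may vanish. -/
def IsMorozovPair {𝔤 : Type*} [LieRing 𝔤] (e f : 𝔤) : Prop :=
  ⁅⁅e, f⁆, e⁆ = 2 • e

theorem IsMorozovPair.map {K 𝔤 𝔥 : Type*} [CommRing K] [LieRing 𝔤] [LieAlgebra K 𝔤] [LieRing 𝔥]
    [LieAlgebra K 𝔥] {e f : 𝔤} (h : IsMorozovPair e f) (φ : 𝔤 →ₗ⁅K⁆ 𝔥) :
    IsMorozovPair (φ e) (φ f) := by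
  rw [IsMorozovPair, ← LieHom.map_lie, ← LieHom.map_lie, h, map_nsmul]

theorem isMorozovPair_swap_iff {𝔤 : Type*} [LieRing 𝔤] {e f : 𝔤} :
    IsMorozovPair f e ↔ ⁅⁅e, f⁆, f⁆ = -(2 • f) := by
  rw [IsMorozovPair, ← lie_skew e f, neg_lie, neg_inj]

section Associative

attribute [local instance 100] LieRing.ofAssociativeRing

section Ring

variable {A : Type*} [Ring A] {e f : A}

theorem lie_pow_eq_smul {R : Type*} [CommSemiring R] [Algebra R A] {h : A} {c : R}
    (he : ⁅h, e⁆ = c • e) (m : ℕ) : ⁅h, e ^ m⁆ = (m * c) • e ^ m := by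
  induction m with
  | zero => simp [Ring.lie_def]
  | succ m ih =>
    have hleib : ⁅h, e ^ (m + 1)⁆ = ⁅h, e ^ m⁆ * e + e ^ m * ⁅h, e⁆ := by
      simp only [Ring.lie_def, pow_succ]
      noncomm_ring
    rw [hleib, ih, he, smul_mul_assoc, mul_smul_comm, ← pow_succ, ← add_smul, Nat.cast_succ,
      add_one_mul]

theorem IsMorozovPair.lie_mul_pow (h : IsMorozovPair e f) (m : ℕ) :
    ⁅e, f⁆ * e ^ m = e ^ m * ⁅e, f⁆ + (2 * m) • e ^ m := by
  have hlie := lie_pow_eq_smul h m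
  rw [Ring.lie_def ⁅e, f⁆, sub_eq_iff_eq_add', Nat.cast_id, mul_comm m] at hlie
  exact hlie

theorem IsMorozovPair.pow_succ_mul (h : IsMorozovPair e f) (m : ℕ) :
    e ^ (m + 1) * f = f * e ^ (m + 1) + (m + 1) • (⁅e, f⁆ * e ^ m - m • e ^ m) := by
  have hef : e * f = f * e + ⁅e, f⁆ := by rw [Ring.lie_def]; abel
  induction m with
  | zero => simp [hef]
  | succ m ih =>
    have hcomm := h.lie_mul_pow (m + 1)
    rw [pow_succ, mul_assoc, hef, mul_add, ← mul_assoc, ih, add_mul, eq_sub_of_add_eq hcomm.symm]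
    simp only [smul_mul_assoc, sub_mul, mul_assoc, ← pow_succ]
    module

end Ring

section SlTwo

section CommRing

variable {R M : Type*} [CommRing R] [AddCommGroup M] [Module R M] {E F : Module.End R M}

/-- The space of top ends of `E`-strings of length more than `m`: the vectors `E ^ m a` killed
by `E`. -/
def stringTop (E : Module.End R M) (m : ℕ) : Submodule R M :=
  LinearMap.ker E ⊓ LinearMap.range (E ^ m)

theorem stringTop_zero (E : Module.End R M) : stringTop E 0 = LinearMap.ker E := by
  simp [stringTop, Module.End.one_eq_id]

theorem stringTop_succ_le (E : Module.End R M) (m : ℕ) : stringTop E (m + 1) ≤ stringTop E m :=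
  inf_le_inf_left _ (by rw [pow_succ]; exact LinearMap.range_comp_le_range E (E ^ m))

theorem IsMorozovPair.lie_apply_pow_apply (h : IsMorozovPair E F) (m : ℕ) (v : M) :
    ⁅E, F⁆ ((E ^ m) v) = (E ^ m) (⁅E, F⁆ v) + (2 * m : R) • (E ^ m) v := by
  have := congr($(h.lie_mul_pow m) v)
  simp only [Module.End.mul_apply, LinearMap.add_apply, LinearMap.smul_apply] at this
  rw [this]
  module

theorem IsMorozovPair.lie_apply_apply (h : IsMorozovPair E F) (v : M) :
    ⁅E, F⁆ (E v) = E (⁅E, F⁆ v) + (2 : R) • E v := by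
  simpa using h.lie_apply_pow_apply 1 v

theorem IsMorozovPair.apply_lie_apply (h : IsMorozovPair F E) (v : M) :
    F (⁅E, F⁆ v) = ⁅E, F⁆ (F v) + (2 : R) • F v := by
  have hlie := h.lie_apply_apply v
  rw [← lie_skew F E, LinearMap.neg_apply, LinearMap.neg_apply, map_neg] at hlie
  rw [← neg_inj, neg_add, hlie]
  module

theorem IsMorozovPair.pow_succ_apply_apply (h : IsMorozovPair E F) (m : ℕ) (v : M) :
    (E ^ (m + 1)) (F v) =
      F ((E ^ (m + 1)) v) + (m + 1 : R) • (⁅E, F⁆ ((E ^ m) v) - (m : R) • (E ^ m) v) := by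
  have := congr($(h.pow_succ_mul m) v)
  simp only [Module.End.mul_apply, LinearMap.add_apply, LinearMap.smul_apply,
    LinearMap.sub_apply] at this
  rw [this]
  module

end CommRing

variable {K M : Type*} [Field K] [CharZero K] [AddCommGroup M] [Module K M] {E F : Module.End K M}

-- The nonzero powers of `E` are eigenvectors of `ad H` for the distinct eigenvalues `m * c`.
theorem isNilpotent_of_lie_eq_smul [FiniteDimensional K M] {H : Module.End K M}
    {c : K} (hc : c ≠ 0) (hE : ⁅H, E⁆ = c • E) : IsNilpotent E := by
  by_contra hnil
  have heig (m : ℕ) : (LieAlgebra.ad K (Module.End K M) H).HasEigenvalue (m * c) :=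
    Module.End.hasEigenvalue_of_hasEigenvector
      ⟨Module.End.mem_eigenspace_iff.2 (lie_pow_eq_smul hE m), fun hm => hnil ⟨m, hm⟩⟩
  refine Set.infinite_range_of_injective (f := fun m : ℕ => (m * c : K)) (fun a b hab => ?_)
    ((LieAlgebra.ad K (Module.End K M) H).finite_hasEigenvalue.subset
      (Set.range_subset_iff.2 heig))
  exact Nat.cast_injective (mul_right_cancel₀ hc hab)

namespace IsMorozovPair

theorem lie_apply_sub_smul_mem_stringTop (h : IsMorozovPair E F) {m : ℕ} {b : M}
    (hb : b ∈ stringTop E m) : ⁅E, F⁆ b - (m : K) • b ∈ stringTop E (m + 1) := by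
  obtain ⟨hEb, a, rfl⟩ := hb
  rw [SetLike.mem_coe, LinearMap.mem_ker] at hEb
  refine ⟨?_, (m + 1 : K)⁻¹ • F a, ?_⟩
  · have hlie := h.lie_apply_apply ((E ^ m) a)
    rw [hEb, map_zero, smul_zero, add_zero] at hlie
    rw [SetLike.mem_coe, LinearMap.mem_ker, map_sub, map_smul, hEb, ← hlie, smul_zero, sub_zero]
  · have hm : (m + 1 : K) ≠ 0 := by exact_mod_cast m.succ_ne_zero
    rw [map_smul, h.pow_succ_apply_apply, pow_succ', Module.End.mul_apply, hEb, map_zero, zero_add,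
      inv_smul_smul₀ hm]

theorem lie_apply_mem_stringTop (h : IsMorozovPair E F) {m : ℕ} {b : M}
    (hb : b ∈ stringTop E m) : ⁅E, F⁆ b ∈ stringTop E m := by
  rw [← sub_add_cancel (⁅E, F⁆ b) ((m : K) • b)]
  exact add_mem (stringTop_succ_le E m (h.lie_apply_sub_smul_mem_stringTop hb))
    (Submodule.smul_mem _ _ hb)

variable [FiniteDimensional K M]

theorem isNilpotent (h : IsMorozovPair E F) : IsNilpotent E :=
  isNilpotent_of_lie_eq_smul (two_ne_zero (α := K)) (h.trans (Nat.cast_smul_eq_nsmul K 2 E).symm)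

-- `⁅E, F⁆ b - n • b = (c - n) • b` climbs ever higher up the strings.
theorem eq_zero_of_mem_stringTop (h : IsMorozovPair E F) {m : ℕ} {b : M} (hb : b ∈ stringTop E m)
    {c : K} (hc : ∀ n ≥ m, c ≠ n) (hbc : ⁅E, F⁆ b = c • b) : b = 0 := by
  obtain ⟨N, hN⟩ := h.isNilpotent
  have hmem (n : ℕ) (hn : m ≤ n) : b ∈ stringTop E n := by
    induction n, hn using Nat.le_induction with
    | base => exact hb
    | succ n hn ih =>
      have := h.lie_apply_sub_smul_mem_stringTop ih
      rwa [hbc, ← sub_smul, Submodule.smul_mem_iff _ (sub_ne_zero.2 (hc n hn))] at this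
  obtain ⟨-, a, rfl⟩ := hmem (m + N) (m.le_add_right N)
  simp [pow_add, hN]

theorem exists_mem_stringTop_sub_smul_eq (h : IsMorozovPair E F) {m : ℕ} {b : M}
    (hb : b ∈ stringTop E m) {c : K} (hc : ∀ n ≥ m, c ≠ n) :
    ∃ a ∈ stringTop E m, ⁅E, F⁆ a - c • a = b := by
  have hmaps : ∀ v ∈ stringTop E m, (⁅E, F⁆ - c • 1) v ∈ stringTop E m := fun v hv =>
    sub_mem (h.lie_apply_mem_stringTop hv) (Submodule.smul_mem _ c hv)
  have hinj : Function.Injective ((⁅E, F⁆ - c • 1).restrict hmaps) := by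
    refine (injective_iff_map_eq_zero _).2 fun v hv => Subtype.ext ?_
    exact h.eq_zero_of_mem_stringTop v.2 hc (sub_eq_zero.1 congr(($hv : M)))
  obtain ⟨a, ha⟩ := LinearMap.surjective_of_injective hinj ⟨b, hb⟩
  exact ⟨a, a.2, congr(($ha : M))⟩

theorem ker_pow_le (h : IsMorozovPair E F) (m : ℕ) :
    LinearMap.ker (E ^ m) ≤ LinearMap.ker E ⊔ LinearMap.range F := by
  induction m with
  | zero => simp [Module.End.one_eq_id]
  | succ m ih =>
    intro v hv
    rw [LinearMap.mem_ker] at hv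
    obtain _ | m := m
    · exact Submodule.mem_sup_left (by simpa using hv)
    have hb : (E ^ (m + 1)) v ∈ stringTop E (m + 1) :=
      ⟨by rwa [SetLike.mem_coe, LinearMap.mem_ker, ← Module.End.mul_apply, ← pow_succ'], v, rfl⟩
    obtain ⟨_, ⟨hEb, a, rfl⟩, ha⟩ := h.exists_mem_stringTop_sub_smul_eq
      (Submodule.smul_mem _ (m + 1 : K)⁻¹ hb) (c := m) fun n hn => by exact_mod_cast (by omega)
    have hx : (E ^ (m + 1)) (F (E a)) = (E ^ (m + 1)) v := by
      have hm : (m + 1 : K) ≠ 0 := by exact_mod_cast m.succ_ne_zero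
      have hE : (E ^ m) (E a) = (E ^ (m + 1)) a := by rw [pow_succ, Module.End.mul_apply]
      have hE' : (E ^ (m + 1)) (E a) = 0 := by
        rwa [pow_succ', Module.End.mul_apply, hE]
      rw [h.pow_succ_apply_apply, hE', hE, ha, map_zero, zero_add, smul_inv_smul₀ hm]
    rw [← sub_add_cancel v (F (E a))]
    exact add_mem (ih (by rw [LinearMap.mem_ker, map_sub, hx, sub_self]))
      (Submodule.mem_sup_right ⟨_, rfl⟩)

theorem ker_sup_range_eq_top (h : IsMorozovPair E F) :
    LinearMap.ker E ⊔ LinearMap.range F = ⊤ := by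
  obtain ⟨N, hN⟩ := h.isNilpotent
  simpa [hN] using h.ker_pow_le N

theorem stringTop_le_iSup_eigenspace (h : IsMorozovPair E F) (m : ℕ) :
    stringTop E m ≤ ⨆ c, Module.End.eigenspace ⁅E, F⁆ c := by
  obtain ⟨N, hN⟩ := h.isNilpotent
  obtain hm | hm := le_total N m
  · simp [stringTop, pow_eq_zero_of_le hm hN]
  induction hm using Nat.decreasingInduction with
  | self => simp [stringTop, hN]
  | of_succ m _ ih =>
    intro b hb
    obtain ⟨a, ha, hab⟩ := h.exists_mem_stringTop_sub_smul_eq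
      (h.lie_apply_sub_smul_mem_stringTop hb) (c := m) fun n hn => by exact_mod_cast (by omega)
    have hba : b - a ∈ Module.End.eigenspace ⁅E, F⁆ (m : K) := by
      rw [Module.End.mem_eigenspace_iff, map_sub, eq_add_of_sub_eq hab]
      module
    rw [← sub_add_cancel b a]
    exact add_mem (Submodule.mem_iSup_of_mem _ hba) (ih ha)

theorem iSup_eigenspace_eq_top (h : IsMorozovPair E F) (h' : IsMorozovPair F E) :
    ⨆ c, Module.End.eigenspace ⁅E, F⁆ c = ⊤ := by
  set X := ⨆ c, Module.End.eigenspace ⁅E, F⁆ c with hX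
  have hFX : X.map F ≤ X := by
    rw [hX, Submodule.map_iSup]
    refine iSup_le fun c => ?_
    rintro _ ⟨v, hv, rfl⟩
    refine Submodule.mem_iSup_of_mem (c - 2) ?_
    rw [SetLike.mem_coe, Module.End.mem_eigenspace_iff] at hv
    have hlie := h'.apply_lie_apply v
    rw [hv, map_smul] at hlie
    rw [Module.End.mem_eigenspace_iff, sub_smul, hlie, add_sub_cancel_right]
  have hrange : X ⊔ LinearMap.range F = ⊤ := by
    rw [eq_top_iff, ← h.ker_sup_range_eq_top, ← stringTop_zero]
    exact sup_le_sup_right (h.stringTop_le_iSup_eigenspace 0) _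
  have hpow (k : ℕ) : X ⊔ LinearMap.range (F ^ k) = ⊤ := by
    induction k with
    | zero => simp [Module.End.one_eq_id]
    | succ k ih =>
      rw [eq_top_iff, ← hrange, ← Submodule.map_top, ← ih, Submodule.map_sup, pow_succ',
        Module.End.mul_eq_comp, LinearMap.range_comp]
      exact sup_le le_sup_left (sup_le_sup_right hFX _)
  obtain ⟨N, hN⟩ := h'.isNilpotent
  simpa [hN] using hpow N

theorem disjoint_ker_range (h : IsMorozovPair E F) (h' : IsMorozovPair F E) :
    Disjoint (LinearMap.ker E) (LinearMap.range F) := by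
  have hEF := Submodule.finrank_sup_add_finrank_inf_eq (LinearMap.ker E) (LinearMap.range F)
  have hFE := Submodule.finrank_sup_add_finrank_inf_eq (LinearMap.ker F) (LinearMap.range E)
  rw [h.ker_sup_range_eq_top, finrank_top] at hEF
  rw [h'.ker_sup_range_eq_top, finrank_top] at hFE
  have hE := E.finrank_range_add_finrank_ker
  have hF := F.finrank_range_add_finrank_ker
  rw [disjoint_iff, ← Submodule.finrank_eq_zero (R := K)]
  omega

-- `Q = ⁅E, F⁆ + E F - 2` satisfies `F Q = E F ^ 2`, hence maps into `{a | F a ∈ range E}`, and it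
-- is injective there.
theorem exists_lie_add_mul_sub_two_eq (h : IsMorozovPair E F) (h' : IsMorozovPair F E) {u : M}
    (hu : F u ∈ LinearMap.range E) : ∃ a, ⁅E, F⁆ a + E (F a) - (2 : K) • a = u := by
  let Q : Module.End K M := ⁅E, F⁆ + E * F - (2 : K) • 1
  have hlie (v : M) : ⁅E, F⁆ v = E (F v) - F (E v) := by
    rw [Ring.lie_def]; rfl
  have hFQ (v : M) : F (Q v) = E (F (F v)) := by
    simp only [Q, LinearMap.sub_apply, LinearMap.add_apply, Module.End.mul_apply,
      LinearMap.smul_apply, Module.End.one_apply, map_sub, map_add, map_smul,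
      h'.apply_lie_apply]
    rw [hlie (F v)]
    abel
  have hmaps : ∀ v ∈ (LinearMap.range E).comap F, Q v ∈ (LinearMap.range E).comap F :=
    fun v _ => ⟨F (F v), (hFQ v).symm⟩
  have hinj : Function.Injective (Q.restrict hmaps) := by
    refine (injective_iff_map_eq_zero _).2 fun ⟨k, hk⟩ hQk => Subtype.ext ?_
    have hQk : Q k = 0 := congr(($hQk : M))
    have hFFk : F (F k) = 0 := Submodule.disjoint_def.1 (h.disjoint_ker_range h') _
      (by rw [LinearMap.mem_ker, ← hFQ, hQk, map_zero]) ⟨_, rfl⟩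
    have hFk : F k = 0 := Submodule.disjoint_def.1 (h'.disjoint_ker_range h) _ hFFk hk
    have hlie_k : ⁅F, E⁆ k = (-2 : K) • k := by
      rw [← lie_skew, LinearMap.neg_apply, neg_smul, neg_inj, ← sub_eq_zero]
      simpa [Q, hFk] using hQk
    refine h'.eq_zero_of_mem_stringTop (m := 0) (by rwa [stringTop_zero]) (fun n _ hn => ?_) hlie_k
    have : (n + 2 : K) = 0 := by rw [← hn]; ring
    exact absurd this (by exact_mod_cast (n + 1).succ_ne_zero)
  obtain ⟨a, ha⟩ := LinearMap.surjective_of_injective hinj ⟨u, hu⟩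
  exact ⟨a, congr(($ha : M))⟩

end IsMorozovPair

end SlTwo

section Lifting

/-- The quotient map by a Lie ideal as a Lie algebra homomorphism; Mathlib's
`LieSubmodule.Quotient.mk'` is only a homomorphism of Lie modules. -/
def quotientLieHom {R L : Type*} [CommRing R] [LieRing L] [LieAlgebra R L] (I : LieIdeal R L) :
    L →ₗ⁅R⁆ L ⧸ I :=
  { (LieSubmodule.Quotient.mk' I : L →ₗ[R] L ⧸ I) with map_lie' := rfl }

theorem IsMorozovPair.exists_isMorozovPair_swap (K : Type*) {L : Type*} [Field K] [CharZero K]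
    [LieRing L] [LieAlgebra K L] [FiniteDimensional K L] {e f : L} (h : IsMorozovPair e f) :
    ∃ f', ⁅e, f'⁆ = ⁅e, f⁆ ∧ IsMorozovPair f' e := by
  have hE : IsMorozovPair (LieAlgebra.ad K L e) (LieAlgebra.ad K L f) := h.map _
  have hb : ⁅⁅e, f⁆, f⁆ + 2 • f ∈ stringTop (LieAlgebra.ad K L e) 0 := by
    have hhe : ⁅e, ⁅e, f⁆⁆ = -(2 • e) := by rw [← lie_skew, h]
    rw [stringTop_zero, LinearMap.mem_ker, LieAlgebra.ad_apply, lie_add, leibniz_lie, hhe, lie_self]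
    simp
  obtain ⟨c, hc, hcb⟩ := hE.exists_mem_stringTop_sub_smul_eq hb (c := -2) fun n _ hn => by
    have : ((n + 2 : ℕ) : K) = 0 := by push_cast; rw [← hn]; ring
    exact absurd this (by exact_mod_cast (n + 1).succ_ne_zero)
  rw [stringTop_zero, LinearMap.mem_ker, LieAlgebra.ad_apply] at hc
  rw [← LieHom.map_lie, LieAlgebra.ad_apply, neg_smul, sub_neg_eq_add] at hcb
  have hf : ⁅e, f - c⁆ = ⁅e, f⁆ := by rw [lie_sub, hc, sub_zero]
  refine ⟨f - c, hf, ?_⟩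
  rw [isMorozovPair_swap_iff, hf, lie_sub, eq_sub_of_add_eq hcb]
  module

section CommRing

variable {R L : Type*} [CommRing R] [LieRing L] [LieAlgebra R L]

theorem quotientLieHom_surjective (I : LieIdeal R L) : Function.Surjective (quotientLieHom I) :=
  LieSubmodule.Quotient.surjective_mk' I

theorem quotientLieHom_eq_zero {I : LieIdeal R L} {x : L} : quotientLieHom I x = 0 ↔ x ∈ I :=
  LieSubmodule.Quotient.mk_eq_zero'

theorem isMorozovPair_quotientLieHom_iff {I : LieIdeal R L} {e f : L} :
    IsMorozovPair (quotientLieHom I e) (quotientLieHom I f) ↔ ⁅⁅e, f⁆, e⁆ - 2 • e ∈ I := by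
  rw [IsMorozovPair, ← quotientLieHom_eq_zero, ← sub_eq_zero, map_sub, map_nsmul, LieHom.map_lie,
    LieHom.map_lie]

theorem IsMorozovPair.quotient_map {I : LieIdeal R L} {e f : L}
    (h : IsMorozovPair (quotientLieHom I e) (quotientLieHom I f))
    {L' : Type*} [LieRing L'] [LieAlgebra R L'] (φ : L →ₗ⁅R⁆ L') :
    IsMorozovPair (quotientLieHom (I.map φ) (φ e)) (quotientLieHom (I.map φ) (φ f)) := by
  rw [isMorozovPair_quotientLieHom_iff] at h ⊢
  simpa only [map_sub, map_nsmul, LieHom.map_lie] using LieIdeal.mem_map (f := φ) h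

theorem IsMorozovPair.toEnd_of_quotient {A : LieIdeal R L} [IsLieAbelian A] {e f : L}
    (h : IsMorozovPair (quotientLieHom A e) (quotientLieHom A f)) :
    IsMorozovPair (LieModule.toEnd R L A e) (LieModule.toEnd R L A f) := by
  have hu := isMorozovPair_quotientLieHom_iff.1 h
  rw [IsMorozovPair, ← LieHom.map_lie, ← LieHom.map_lie, ← map_nsmul, ← sub_eq_zero, ← map_sub]
  ext a
  exact congrArg Subtype.val (trivial_lie_zero A A ⟨_, hu⟩ a)

end CommRing

variable {K L : Type*} [Field K] [CharZero K] [LieRing L] [LieAlgebra K L] [FiniteDimensional K L]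

theorem exists_isMorozovPair_add_of_isLieAbelian (A : LieIdeal K L) [IsLieAbelian A] {e f : L}
    (h : IsMorozovPair (quotientLieHom A e) (quotientLieHom A f))
    (h' : IsMorozovPair (quotientLieHom A f) (quotientLieHom A e)) :
    ∃ a ∈ A, IsMorozovPair (e + a) f := by
  have hu := isMorozovPair_quotientLieHom_iff.1 h
  have hc := isMorozovPair_quotientLieHom_iff.1 h'
  have hFu : LieModule.toEnd K L A f (-⟨_, hu⟩) ∈ LinearMap.range (LieModule.toEnd K L A e) := by
    refine ⟨⟨_, hc⟩, Subtype.ext ?_⟩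
    change ⁅e, ⁅⁅f, e⁆, f⁆ - 2 • f⁆ = ⁅f, -(⁅⁅e, f⁆, e⁆ - 2 • e)⁆
    have hjacobi : ⁅e, ⁅⁅f, e⁆, f⁆⁆ = -⁅f, ⁅⁅e, f⁆, e⁆⁆ := by
      rw [leibniz_lie, ← lie_skew e f, lie_neg, lie_self, neg_zero, add_zero, neg_lie, lie_skew,
        lie_skew]
    rw [lie_sub, lie_neg, lie_sub, hjacobi, lie_nsmul, lie_nsmul, ← lie_skew e f]
    module
  obtain ⟨a, ha⟩ := h.toEnd_of_quotient.exists_lie_add_mul_sub_two_eq h'.toEnd_of_quotient hFu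
  have ha : ⁅⁅e, f⁆, (a : L)⁆ + ⁅e, ⁅f, (a : L)⁆⁆ - (2 : K) • (a : L) =
      -(⁅⁅e, f⁆, e⁆ - 2 • e) := by
    rw [← LieHom.map_lie] at ha
    exact congrArg Subtype.val ha
  have haa : ⁅⁅(a : L), f⁆, (a : L)⁆ = 0 :=
    congrArg Subtype.val (trivial_lie_zero A A ⟨_, lie_mem_left K L A _ f a.2⟩ a)
  refine ⟨a, a.2, ?_⟩
  have hEF : ⁅⁅(a : L), f⁆, e⁆ = ⁅e, ⁅f, (a : L)⁆⁆ := by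
    rw [← lie_skew, ← lie_skew (a : L), lie_neg, neg_neg]
  rw [IsMorozovPair, add_lie, add_lie, lie_add, lie_add, haa, hEF]
  linear_combination (norm := module) ha

theorem exists_isMorozovPair_quotient_lie_self (A : LieIdeal K L) {e f : L}
    (h : IsMorozovPair (quotientLieHom A e) (quotientLieHom A f)) :
    ∃ e' f', e' - e ∈ A ∧
      IsMorozovPair (quotientLieHom ⁅A, A⁆ e') (quotientLieHom ⁅A, A⁆ f') := by
  obtain ⟨f₁, hf₁, h₁'⟩ := h.exists_isMorozovPair_swap K
  obtain ⟨f₁, rfl⟩ := quotientLieHom_surjective A f₁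
  have h₁ : IsMorozovPair (quotientLieHom A e) (quotientLieHom A f₁) := by rwa [IsMorozovPair, hf₁]
  let π := quotientLieHom ⁅A, A⁆
  have hπ : Function.Surjective π := quotientLieHom_surjective _
  have : IsLieAbelian (A.map π) := by
    rw [LieSubmodule.lie_abelian_iff_lie_self_eq_bot, ← LieIdeal.map_bracket_eq π hπ,
      LieIdeal.map_eq_bot_iff]
    exact fun x hx => quotientLieHom_eq_zero.2 hx
  obtain ⟨_, ha, he'⟩ :=
    exists_isMorozovPair_add_of_isLieAbelian (A.map π) (h₁.quotient_map π) (h₁'.quotient_map π)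
  obtain ⟨a, rfl⟩ := LieIdeal.mem_map_of_surjective hπ ha
  exact ⟨e + a, f₁, by simp, by rwa [map_add]⟩

theorem exists_isMorozovPair_of_isSolvable (I : LieIdeal K L) [LieAlgebra.IsSolvable I] {e f : L}
    (h : IsMorozovPair (quotientLieHom I e) (quotientLieHom I f)) :
    ∃ e' f', e' - e ∈ I ∧ IsMorozovPair e' f' ∧ IsMorozovPair f' e' := by
  have hlift (k : ℕ) : ∃ e' f', e' - e ∈ I ∧
      IsMorozovPair (quotientLieHom (LieAlgebra.derivedSeriesOfIdeal K L k I) e')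
        (quotientLieHom (LieAlgebra.derivedSeriesOfIdeal K L k I) f') := by
    induction k with
    | zero => exact ⟨e, f, by simp, h⟩
    | succ k ih =>
      obtain ⟨e₁, f₁, he₁, h₁⟩ := ih
      obtain ⟨e₂, f₂, he₂, h₂⟩ := exists_isMorozovPair_quotient_lie_self _ h₁
      rw [LieAlgebra.derivedSeriesOfIdeal_succ]
      refine ⟨e₂, f₂, ?_, h₂⟩
      rw [← sub_add_sub_cancel e₂ e₁ e]
      exact add_mem (LieAlgebra.derivedSeriesOfIdeal_le_self I k he₂) he₁
  obtain ⟨k, hk⟩ := (LieAlgebra.isSolvable_iff K (L := I)).1 inferInstance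
  rw [LieIdeal.derivedSeries_eq_bot_iff] at hk
  obtain ⟨e', f', he', h'⟩ := hlift k
  rw [isMorozovPair_quotientLieHom_iff, hk, LieSubmodule.mem_bot, sub_eq_zero] at h'
  obtain ⟨f'', hf'', hswap⟩ := IsMorozovPair.exists_isMorozovPair_swap K h'
  exact ⟨e', f'', he', by rwa [IsMorozovPair, hf''], hswap⟩

end Lifting

section JacobsonMorozov

section Ring

variable {A : Type*} [Ring A] {a b : A}

theorem pow_succ_mul_of_commute_lie (hab : Commute a ⁅a, b⁆) (n : ℕ) :
    a ^ (n + 1) * b = b * a ^ (n + 1) + (n + 1) • (a ^ n * ⁅a, b⁆) := by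
  have hmul : a * b = b * a + ⁅a, b⁆ := by rw [Ring.lie_def]; abel
  induction n with
  | zero => simp [hmul]
  | succ n ih =>
    have hcomm : ⁅a, b⁆ * a ^ (n + 1) = a ^ (n + 1) * ⁅a, b⁆ := (hab.pow_left _).eq.symm
    rw [pow_succ' a (n + 1), mul_assoc, ih, mul_add, ← mul_assoc, hmul, add_mul, hcomm,
      mul_smul_comm, ← mul_assoc a, ← pow_succ', mul_assoc b]
    module

variable [IsAddTorsionFree A]

theorem isNilpotent_lie_of_commute (hab : Commute a ⁅a, b⁆) (ha : IsNilpotent a) :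
    IsNilpotent ⁅a, b⁆ := by
  obtain ⟨n, hn⟩ := ha
  suffices h : ∀ m, a ^ n * ⁅a, b⁆ ^ m = 0 → IsNilpotent ⁅a, b⁆ from h 0 (by simp [hn])
  clear hn
  induction n with
  | zero => exact fun m hm => ⟨m, by simpa using hm⟩
  | succ n ih =>
    intro m hm
    have hm' : ⁅a, b⁆ ^ m * a ^ (n + 1) = 0 := by rwa [(hab.symm.pow_pow m (n + 1)).eq]
    have hsmul : (n + 1) • (⁅a, b⁆ ^ m * (a ^ n * ⁅a, b⁆) * ⁅a, b⁆ ^ m) = 0 := by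
      rw [← smul_mul_assoc, ← mul_smul_comm,
        eq_sub_of_add_eq' (pow_succ_mul_of_commute_lie hab n).symm, mul_sub, sub_mul,
        ← mul_assoc, hm', mul_assoc (⁅a, b⁆ ^ m), mul_assoc b, hm]
      simp
    refine ih (m + 1 + m) ?_
    rw [← (smul_eq_zero.1 hsmul).resolve_left n.succ_ne_zero, pow_add, pow_succ,
      ← mul_assoc (⁅a, b⁆ ^ m), (hab.symm.pow_pow m n).eq]
    simp only [mul_assoc]

-- On the right ideal of `x` with `a ^ (n + 1) * x = 0`, applying `a ^ n` turns left multiplication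
-- by `a * b` into that by `(n + 1) • ⁅a, b⁆`.
theorem isNilpotent_mul_of_commute_lie (hab : Commute a ⁅a, b⁆) (ha : IsNilpotent a) :
    IsNilpotent (a * b) := by
  obtain ⟨r, hr⟩ := isNilpotent_lie_of_commute hab ha
  obtain ⟨n, hn⟩ := ha
  suffices h : ∀ x, a ^ n * x = 0 → ∃ N, (a * b) ^ N * x = 0 by
    simpa [IsNilpotent] using h 1 (by simp [hn])
  clear hn
  induction n with
  | zero => exact fun x hx => ⟨0, by simpa using hx⟩
  | succ n ih =>
    have hmul {x : A} (hx : a ^ (n + 1) * x = 0) :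
        a ^ n * (a * b * x) = (n + 1) • (⁅a, b⁆ * (a ^ n * x)) := by
      rw [← mul_assoc, ← mul_assoc, ← pow_succ, pow_succ_mul_of_commute_lie hab, add_mul, mul_assoc,
        hx, mul_zero, zero_add, (hab.pow_left n).eq, smul_mul_assoc, mul_assoc]
    have hpow {x : A} (hx : a ^ (n + 1) * x = 0) (i : ℕ) :
        a ^ (n + 1) * ((a * b) ^ i * x) = 0 ∧
          a ^ n * ((a * b) ^ i * x) = (n + 1) ^ i • (⁅a, b⁆ ^ i * (a ^ n * x)) := by
      induction i with
      | zero => simpa using hx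
      | succ i ihi =>
        obtain ⟨hi, hi'⟩ := ihi
        rw [pow_succ' (a * b), mul_assoc (a * b)]
        constructor
        · rw [pow_succ', mul_assoc, hmul hi, mul_smul_comm, ← mul_assoc, hab.eq, mul_assoc,
            ← mul_assoc a, ← pow_succ', hi, mul_zero, smul_zero]
        · rw [hmul hi, hi', mul_smul_comm, smul_smul, ← pow_succ', ← mul_assoc, ← pow_succ']
    intro x hx
    obtain ⟨N, hN⟩ := ih ((a * b) ^ r * x) (by rw [(hpow hx r).2, hr, zero_mul, smul_zero])
    exact ⟨N + r, by rw [pow_add, mul_assoc, hN]⟩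

end Ring

variable {K S : Type*} [Field K] [CharZero K] [LieRing S] [LieAlgebra K S]

theorem killingForm_eq_zero_of_isNilpotent_ad {y z : S} (hy : IsNilpotent (LieAlgebra.ad K S y))
    (hz : ⁅y, ⁅y, z⁆⁆ = 0) : killingForm K S y z = 0 := by
  have : IsAddTorsionFree (Module.End K S) := .of_isTorsionFree K _
  have hcomm : Commute (LieAlgebra.ad K S y) ⁅LieAlgebra.ad K S y, LieAlgebra.ad K S z⁆ := by
    rw [commute_iff_lie_eq, ← LieHom.map_lie, ← LieHom.map_lie, hz, map_zero]
  rw [killingForm_apply_apply]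
  exact (LinearMap.isNilpotent_trace_of_isNilpotent
    (isNilpotent_mul_of_commute_lie hcomm hy)).eq_zero

variable [FiniteDimensional K S] [LieAlgebra.IsKilling K S]

theorem exists_lie_lie_eq_self {y : S} (hy : IsNilpotent (LieAlgebra.ad K S y)) :
    ∃ z, ⁅y, ⁅y, z⁆⁆ = y := by
  have hnd : (killingForm K S).Nondegenerate := LieAlgebra.IsKilling.killingForm_nondegenerate K S
  have hsymm := LieModule.traceForm_isSymm K S S
  let W := LinearMap.range (LieAlgebra.ad K S y * LieAlgebra.ad K S y)
  suffices hyW : y ∈ W by simpa [W] using hyW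
  rw [← LinearMap.BilinForm.orthogonal_orthogonal hnd hsymm.isRefl W,
    LinearMap.BilinForm.mem_orthogonal_iff]
  intro z hz
  rw [LinearMap.BilinForm.mem_orthogonal_iff] at hz
  refine hsymm.isRefl _ _ (killingForm_eq_zero_of_isNilpotent_ad hy (hnd.2 _ fun u => ?_))
  have := hz ⁅y, ⁅y, u⁆⁆ ⟨u, rfl⟩
  rwa [LieModule.traceForm_apply_lie_apply', LieModule.traceForm_apply_lie_apply', neg_neg] at this

theorem exists_isMorozovPair_of_isNilpotent_ad {y : S} (hy : IsNilpotent (LieAlgebra.ad K S y)) :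
    ∃ f, IsMorozovPair y f := by
  obtain ⟨z, hz⟩ := exists_lie_lie_eq_self hy
  refine ⟨-(2 • z), ?_⟩
  rw [IsMorozovPair, lie_neg, lie_nsmul, neg_lie, ← lie_skew, neg_neg, lie_nsmul, hz]

end JacobsonMorozov

section Intertwining

variable {R M N : Type*} [CommRing R] [AddCommGroup M] [Module R M] [AddCommGroup N] [Module R N]
  {φ : M →ₗ[R] N} {A : Module.End R M} {B : Module.End R N}

/-- A linear map intertwining two endomorphisms, as an `R[X]`-linear map for the `R[X]`-module
structures that the endomorphisms define. -/
noncomputable def aevalMap (h : φ ∘ₗ A = B ∘ₗ φ) :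
    Module.AEval' A →ₗ[Polynomial R] Module.AEval' B :=
  LinearMap.ofAEval A (Module.AEval'.of B ∘ₗ φ) fun x => by
    simpa [Module.AEval'.X_smul_of] using LinearMap.congr_fun h x

theorem comp_aeval_eq (h : φ ∘ₗ A = B ∘ₗ φ) (p : Polynomial R) :
    φ ∘ₗ Polynomial.aeval A p = Polynomial.aeval B p ∘ₗ φ := by
  ext v
  refine (Module.AEval'.of B).injective ?_
  exact map_smul (aevalMap h) p (Module.AEval'.of A v)

theorem isSemisimple_of_injective (h : φ ∘ₗ A = B ∘ₗ φ) (hφ : Function.Injective φ)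
    (hB : B.IsSemisimple) : A.IsSemisimple := by
  have : IsSemisimpleModule (Polynomial R) (Module.AEval' B) := hB
  exact IsSemisimpleModule.of_injective (aevalMap h) fun v w hvw => hφ hvw

theorem isSemisimple_of_surjective (h : φ ∘ₗ A = B ∘ₗ φ) (hφ : Function.Surjective φ)
    (hA : A.IsSemisimple) : B.IsSemisimple := by
  have : IsSemisimpleModule (Polynomial R) (Module.AEval' A) := hA
  exact IsSemisimpleModule.of_surjective (aevalMap h) hφ

theorem isNilpotent_of_injective (h : φ ∘ₗ A = B ∘ₗ φ) (hφ : Function.Injective φ)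
    (hB : IsNilpotent B) : IsNilpotent A := by
  obtain ⟨k, hk⟩ := hB
  refine ⟨k, (LinearMap.cancel_left hφ).1 ?_⟩
  rw [← Module.End.commute_pow_left_of_commute h.symm, hk, LinearMap.zero_comp, LinearMap.comp_zero]

end Intertwining

section JordanDecomposition

variable {K S : Type*} [Field K] [LieRing S] [LieAlgebra K S] [FiniteDimensional K S]
  [LieAlgebra.IsKilling K S]

variable (K S) in
theorem ad_injective : Function.Injective (LieAlgebra.ad K S) :=
  (LieHom.ker_eq_bot _).1 (LieAlgebra.ad_ker_eq_bot_of_hasTrivialRadical K S)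

-- `⁅n, ·⁆` is a derivation, so `δ` is one.
theorem exists_ad_eq {n δ : Module.End K S}
    (h : (LieAlgebra.ad K S : S →ₗ[K] Module.End K S) ∘ₗ δ =
      LieAlgebra.ad K (Module.End K S) n ∘ₗ LieAlgebra.ad K S) :
    ∃ y, LieAlgebra.ad K S y = δ := by
  have h (v : S) : LieAlgebra.ad K S (δ v) = ⁅n, LieAlgebra.ad K S v⁆ := LinearMap.congr_fun h v
  let Δ : LieDerivation K S S :=
    { toLinearMap := δ
      leibniz' a b := ad_injective K S (by
        rw [map_sub, LieHom.map_lie, LieHom.map_lie, h, h, h, LieHom.map_lie, leibniz_lie,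
          ← lie_skew (LieAlgebra.ad K S b), sub_neg_eq_add, add_comm]) }
  obtain ⟨y, hy⟩ := LieDerivation.IsKilling.exists_eq_ad Δ
  refine ⟨y, LinearMap.ext fun v => ?_⟩
  rw [LieAlgebra.ad_apply, ← LieDerivation.ad_apply_apply K, hy]
  rfl

theorem exists_isNilpotent_ad_isSemisimple_ad_sub [CharZero K] (x : S) :
    ∃ y, IsNilpotent (LieAlgebra.ad K S y) ∧ (LieAlgebra.ad K S (x - y)).IsSemisimple := by
  let ad := LieAlgebra.ad K (Module.End K S)
  obtain ⟨n, hn, s, hs, hnil, hss, hns⟩ := (LieAlgebra.ad K S x).exists_isNilpotent_isSemisimple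
  have hcomm : Commute n s := Algebra.commute_of_mem_adjoin_singleton_of_commute hs
    (Algebra.commute_of_mem_adjoin_self hn).symm
  obtain ⟨p, hp⟩ : ∃ p, Polynomial.aeval (ad (n + s)) p = ad n := by
    simpa [Algebra.adjoin_singleton_eq_range_aeval] using
      LieAlgebra.ad_mem_adjoin_of_isNilpotent hcomm hnil hss
  have hx : (LieAlgebra.ad K S : S →ₗ[K] Module.End K S) ∘ₗ LieAlgebra.ad K S x =
      ad (n + s) ∘ₗ LieAlgebra.ad K S := by
    rw [← hns]
    exact LinearMap.ext fun v => LieHom.map_lie (LieAlgebra.ad K S) x v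
  have hδ := comp_aeval_eq hx p
  rw [hp] at hδ
  obtain ⟨y, hy⟩ := exists_ad_eq hδ
  rw [← hy] at hδ
  refine ⟨y, isNilpotent_of_injective hδ (ad_injective K S)
    (LieAlgebra.ad_nilpotent_of_nilpotent hnil), isSemisimple_of_injective ?_ (ad_injective K S)
      (LieAlgebra.ad_isSemisimple_of_isSemisimple hss)⟩
  rw [map_sub, LinearMap.comp_sub, hx, hδ, ← LinearMap.sub_comp, ← map_sub, add_sub_cancel_left]

end JordanDecomposition

section Radical

variable {R L : Type*} [CommRing R] [LieRing L] [LieAlgebra R L]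

theorem isSolvable_of_lie_self_le {I J : LieIdeal R L} [LieAlgebra.IsSolvable I]
    (h : ⁅J, J⁆ ≤ I) : LieAlgebra.IsSolvable J := by
  obtain ⟨k, hk⟩ := (LieAlgebra.isSolvable_iff R (L := I)).1 inferInstance
  rw [LieIdeal.derivedSeries_eq_bot_iff] at hk
  refine (LieAlgebra.isSolvable_iff R (L := J)).2 ⟨k + 1, ?_⟩
  rw [LieIdeal.derivedSeries_eq_bot_iff, LieAlgebra.derivedSeriesOfIdeal_add, eq_bot_iff, ← hk]
  exact LieAlgebra.derivedSeriesOfIdeal_mono h k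

theorem hasTrivialRadical_quotient_radical [IsNoetherian R L] :
    LieAlgebra.HasTrivialRadical R (L ⧸ LieAlgebra.radical R L) := by
  rw [LieAlgebra.hasTrivialRadical_iff_no_abelian_ideals]
  intro I hI
  let π := quotientLieHom (LieAlgebra.radical R L)
  have hlie : ⁅I.comap π, I.comap π⁆ ≤ LieAlgebra.radical R L := by
    have hmap : LieIdeal.map π ⁅I.comap π, I.comap π⁆ = ⊥ := by
      rw [LieIdeal.map_bracket_eq π (quotientLieHom_surjective _), eq_bot_iff,
        ← (LieSubmodule.lie_abelian_iff_lie_self_eq_bot I).1 hI]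
      exact LieSubmodule.mono_lie LieIdeal.map_comap_le LieIdeal.map_comap_le
    exact fun x hx => quotientLieHom_eq_zero.1 (LieIdeal.map_eq_bot_iff.1 hmap hx)
  have hle := (LieAlgebra.LieIdeal.solvable_iff_le_radical R L _).1 (isSolvable_of_lie_self_le hlie)
  refine (LieSubmodule.eq_bot_iff I).2 fun x hx => ?_
  obtain ⟨x, rfl⟩ := quotientLieHom_surjective _ x
  exact quotientLieHom_eq_zero.2 (hle (LieIdeal.mem_comap.2 hx))

theorem eq_top_of_isSolvable_of_sup_eq_top (hL : LieAlgebra.derivedSeries R L 1 = ⊤)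
    {I J : LieIdeal R L} [LieAlgebra.IsSolvable J] (h : J ⊔ I = ⊤) : I = ⊤ := by
  obtain ⟨k, hk⟩ := (LieAlgebra.isSolvable_iff R (L := J)).1 inferInstance
  rw [LieIdeal.derivedSeries_eq_bot_iff] at hk
  have hle := LieAlgebra.derivedSeriesOfIdeal_add_le_add (R := R) (I := J) I k 0
  rwa [LieSubmodule.add_eq_sup, LieSubmodule.add_eq_sup, h, ← LieAlgebra.derivedSeries_def,
    LieIdeal.derivedSeries_eq_top _ hL, hk, LieAlgebra.derivedSeriesOfIdeal_zero, bot_sup_eq,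
    top_le_iff] at hle

end Radical

section Toral

variable {F L L' : Type*} [Field F] [LieRing L] [LieAlgebra F L] [LieRing L'] [LieAlgebra F L']

theorem isToral_iff : IsToral F L ↔ ∀ x, (LieAlgebra.ad F L x).IsSemisimple := by
  simp only [Module.End.isSemisimple_iff]
  exact Iff.rfl

theorem isToral_of_isLieAbelian [IsLieAbelian L] : IsToral F L := by
  rw [isToral_iff]
  intro x
  have hx : LieAlgebra.ad F L x = 0 := LinearMap.ext (trivial_lie_zero L L x)
  rw [hx]
  exact Module.End.isSemisimple_zero

theorem IsToral.of_injective (hL' : IsToral F L') {φ : L →ₗ⁅F⁆ L'} (hφ : Function.Injective φ) :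
    IsToral F L := by
  rw [isToral_iff] at hL' ⊢
  exact fun x => isSemisimple_of_injective (φ := (φ : L →ₗ[F] L')) (B := LieAlgebra.ad F L' (φ x))
    (LinearMap.ext fun y => φ.map_lie x y) hφ (hL' _)

theorem IsPluperfect.eq_zero_of_isToral (hL : IsPluperfect F L) (hL' : IsToral F L')
    (φ : L →ₗ⁅F⁆ L') : φ = 0 := by
  have hinj : Function.Injective (φ.range.incl.comp φ.quotKerEquivRange.toLieHom) :=
    Subtype.val_injective.comp φ.quotKerEquivRange.injective
  ext x
  rw [LieHom.zero_apply, ← LieHom.mem_ker, hL φ.ker (hL'.of_injective hinj)]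
  exact LieSubmodule.mem_top x

theorem IsPluperfect.derivedSeries_one_eq_top (hL : IsPluperfect F L) :
    LieAlgebra.derivedSeries F L 1 = ⊤ := by
  have : IsLieAbelian (L ⧸ LieAlgebra.derivedSeries F L 1) := by
    refine ⟨fun x y => ?_⟩
    obtain ⟨x, rfl⟩ := quotientLieHom_surjective _ x
    obtain ⟨y, rfl⟩ := quotientLieHom_surjective _ y
    rw [← LieHom.map_lie, quotientLieHom_eq_zero]
    exact LieSubmodule.lie_mem_lie (LieSubmodule.mem_top x) (LieSubmodule.mem_top y)
  exact hL _ isToral_of_isLieAbelian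

variable [CharZero F] [FiniteDimensional F L]

theorem isToral_quotient_of_isNilpotent_ad_mem [LieAlgebra.IsKilling F L] {J : LieIdeal F L}
    (hJ : ∀ y, IsNilpotent (LieAlgebra.ad F L y) → y ∈ J) : IsToral F (L ⧸ J) := by
  rw [isToral_iff]
  intro x
  obtain ⟨x, rfl⟩ := quotientLieHom_surjective J x
  obtain ⟨y, hy, hxy⟩ := exists_isNilpotent_ad_isSemisimple_ad_sub (K := F) x
  rw [← sub_zero (quotientLieHom J x), ← quotientLieHom_eq_zero.2 (hJ y hy), ← map_sub]
  exact isSemisimple_of_surjective (φ := (quotientLieHom J : L →ₗ[F] L ⧸ J))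
    (LinearMap.ext fun z => (quotientLieHom J).map_lie (x - y) z) (quotientLieHom_surjective J) hxy

theorem IsPluperfect.exists_isMorozovPair (hL : IsPluperfect F L) {I : LieIdeal F L}
    (hI : I ≠ ⊤) : ∃ e f, e ∉ I ∧ IsMorozovPair e f ∧ IsMorozovPair f e := by
  let R := LieAlgebra.radical F L
  let π := quotientLieHom R
  have := hasTrivialRadical_quotient_radical (R := F) (L := L)
  obtain ⟨y, hy, hyI⟩ : ∃ y, IsNilpotent (LieAlgebra.ad F (L ⧸ R) y) ∧ y ∉ I.map π := by
    by_contra! hmem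
    refine hI (eq_top_of_isSolvable_of_sup_eq_top hL.derivedSeries_one_eq_top (J := R) ?_)
    have hzero := hL.eq_zero_of_isToral (isToral_quotient_of_isNilpotent_ad_mem hmem)
      ((quotientLieHom (I.map π)).comp π)
    refine eq_top_iff.2 fun x _ => ?_
    obtain ⟨z, hzx⟩ := LieIdeal.mem_map_of_surjective (quotientLieHom_surjective R)
      (quotientLieHom_eq_zero.1 (LieHom.congr_fun hzero x))
    rw [← sub_add_cancel x z]
    refine add_mem (LieSubmodule.mem_sup_left (quotientLieHom_eq_zero.1 ?_))
      (LieSubmodule.mem_sup_right z.2)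
    rw [map_sub]
    exact sub_eq_zero.2 hzx.symm
  obtain ⟨f, hf⟩ := exists_isMorozovPair_of_isNilpotent_ad hy
  obtain ⟨y, rfl⟩ := quotientLieHom_surjective R y
  obtain ⟨f, rfl⟩ := quotientLieHom_surjective R f
  obtain ⟨e, f', he, hef, hfe⟩ := exists_isMorozovPair_of_isSolvable R hf
  refine ⟨e, f', fun heI => hyI ?_, hef, hfe⟩
  have hey : π e = π y := sub_eq_zero.1 (by rw [← map_sub]; exact quotientLieHom_eq_zero.2 he)
  exact hey ▸ LieIdeal.mem_map heI

end Toral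

section NonzeroWeights

variable {R L : Type*} [CommRing R] [LieRing L] [LieAlgebra R L]

variable (R) in
/-- The Lie subalgebra generated by the eigenvectors of `ad h` with nonzero eigenvalue. -/
def nonzeroWeightSubalgebra (h : L) : LieSubalgebra R L :=
  LieSubalgebra.lieSpan R L {v | ∃ c : R, c ≠ 0 ∧ ⁅h, v⁆ = c • v}

theorem mem_normalizer_nonzeroWeightSubalgebra {h x : L} {c : R} (hx : ⁅h, x⁆ = c • x) :
    x ∈ (nonzeroWeightSubalgebra R h).normalizer := by
  obtain rfl | hc := eq_or_ne c 0
  · rw [LieSubalgebra.mem_normalizer_iff]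
    intro y hy
    induction hy using LieSubalgebra.lieSpan_induction with
    | mem y hy =>
      obtain ⟨c, hc, hy⟩ := hy
      exact LieSubalgebra.subset_lieSpan
        ⟨c, hc, by rw [leibniz_lie, hx, zero_smul, zero_lie, zero_add, hy, lie_smul]⟩
    | zero => simp
    | add y z _ _ hy hz => rw [lie_add]; exact add_mem hy hz
    | smul a y _ hy => rw [lie_smul]; exact LieSubalgebra.smul_mem _ a hy
    | lie y z hy hz hxy hxz =>
      rw [leibniz_lie]
      exact add_mem (LieSubalgebra.lie_mem _ hxy hz) (LieSubalgebra.lie_mem _ hy hxz)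
  · exact LieSubalgebra.le_normalizer _ (LieSubalgebra.subset_lieSpan ⟨c, hc, hx⟩)

theorem exists_lieIdeal_coe_eq_nonzeroWeightSubalgebra {h : L}
    (hh : ⨆ c, Module.End.eigenspace (LieAlgebra.ad R L h) c = ⊤) :
    ∃ I : LieIdeal R L, (I : LieSubalgebra R L) = nonzeroWeightSubalgebra R h := by
  have hle : ⊤ ≤ (nonzeroWeightSubalgebra R h).normalizer.toSubmodule :=
    hh ▸ iSup_le fun c x hx => mem_normalizer_nonzeroWeightSubalgebra
      (Module.End.mem_eigenspace_iff.1 hx)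
  rw [LieSubalgebra.exists_lieIdeal_coe_eq_iff]
  exact fun x y hy => (LieSubalgebra.mem_normalizer_iff _ x).1 (hle Submodule.mem_top) y hy

end NonzeroWeights

section InertialSubalgebra

variable {K L L' M : Type*} [Field K] [LieRing L] [LieAlgebra K L] [LieRing L'] [LieAlgebra K L']
  [AddCommGroup M] [Module K M]

theorem mem_of_forall_sum_pow_smul_mem [Infinite K] {U : Submodule K M} {k : ℕ} {v : ℕ → M}
    (h : ∀ t : K, ∑ i ∈ Finset.range k, t ^ i • v i ∈ U) {i : ℕ} (hi : i < k) : v i ∈ U := by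
  by_contra hv
  obtain ⟨φ, hφ, hφU⟩ := Submodule.exists_dual_map_eq_bot_of_notMem hv inferInstance
  rw [← LinearMap.le_ker_iff_map] at hφU
  have hp : ∑ j ∈ Finset.range k, Polynomial.monomial j (φ (v j)) = 0 := by
    refine Polynomial.funext fun t => ?_
    have ht : φ (∑ j ∈ Finset.range k, t ^ j • v j) = 0 := hφU (h t)
    simpa [Polynomial.eval_finsetSum, mul_comm] using ht
  exact hφ (by simpa [Polynomial.finsetSum_coeff, Polynomial.coeff_monomial, hi]
    using congr(Polynomial.coeff $hp i))

theorem apply_mem_of_forall_exp_smul_apply_mem [CharZero K] [Module ℚ M] {D : Module.End K M}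
    (hD : IsNilpotent D) {U : Submodule K M} {v : M}
    (h : ∀ t : K, IsNilpotent.exp (t • D) v ∈ U) : D v ∈ U := by
  obtain ⟨k, hk⟩ := hD
  have hmem (t : K) :
      ∑ i ∈ Finset.range (k + 2), t ^ i • (i.factorial : ℚ)⁻¹ • (D ^ i) v ∈ U := by
    have hexp := IsNilpotent.exp_eq_sum (a := t • D) (k := k + 2) (by simp [smul_pow, pow_add, hk])
    simpa only [hexp, LinearMap.sum_apply, LinearMap.smul_apply, smul_pow,
      smul_comm (_ : ℚ) (_ : K)] using h t
  simpa using mem_of_forall_sum_pow_smul_mem hmem (i := 1) (by omega)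

theorem IsInertial.map {y : L} (hy : IsInertial K y) (φ : L ≃ₗ⁅K⁆ L') : IsInertial K (φ y) := by
  obtain ⟨hy₀, x, c, hc, hxy⟩ := hy
  refine ⟨fun h => hy₀ (φ.injective (h.trans (map_zero φ).symm)), φ x, c, hc, ?_⟩
  rw [← LieEquiv.map_lie, hxy, map_smul]

variable [CharZero K] [FiniteDimensional K L]

theorem IsInertial.isNilpotent_ad {y : L} (hy : IsInertial K y) :
    IsNilpotent (LieAlgebra.ad K L y) := by
  obtain ⟨-, x, c, hc, hxy⟩ := hy
  refine isNilpotent_of_lie_eq_smul (H := LieAlgebra.ad K L x) hc ?_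
  rw [← LieHom.map_lie, hxy, map_smul]

-- The automorphisms `exp (t • ad y)` permute the inertial elements.
theorem IsInertial.lie_mem_span {y z : L} (hy : IsInertial K y) (hz : IsInertial K z) :
    ⁅y, z⁆ ∈ Submodule.span K {x : L | IsInertial K x} := by
  let _ : Module ℚ L := Module.compHom L (algebraMap ℚ K)
  let _ : LieAlgebra ℚ L := { lie_smul q := lie_smul (algebraMap ℚ K q) }
  refine apply_mem_of_forall_exp_smul_apply_mem hy.isNilpotent_ad fun t => ?_
  have hD : (t • LieDerivation.ad K L y).toLinearMap = t • LieAlgebra.ad K L y := by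
    rw [LieDerivation.coe_smul_linearMap, LieDerivation.coe_ad_apply_eq_ad_apply]
  have hnil : IsNilpotent (t • LieDerivation.ad K L y).toLinearMap :=
    hD ▸ hy.isNilpotent_ad.smul t
  rw [← hD, ← LieDerivation.exp_map_apply _ hnil]
  exact Submodule.subset_span (hz.map _)

variable (K L) in
/-- The Lie subalgebra spanned by the inertial elements. -/
def inertialSubalgebra : LieSubalgebra K L where
  __ := Submodule.span K {x : L | IsInertial K x}
  lie_mem' hy hz := LinearMap.BilinMap.apply_apply_mem_of_mem_span _ _ _
    (LieAlgebra.ad K L : L →ₗ[K] Module.End K L)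
    (fun _ hy _ hz => IsInertial.lie_mem_span hy hz) _ _ hy hz

theorem mem_inertialSubalgebra_of_lie_eq_smul {x y : L} {c : K} (hc : c ≠ 0)
    (h : ⁅x, y⁆ = c • y) : y ∈ inertialSubalgebra K L := by
  obtain rfl | hy := eq_or_ne y 0
  · exact zero_mem _
  · exact Submodule.subset_span ⟨hy, x, c, hc, h⟩

theorem nonzeroWeightSubalgebra_le_inertialSubalgebra (h : L) :
    nonzeroWeightSubalgebra K h ≤ inertialSubalgebra K L :=
  LieSubalgebra.lieSpan_le.2 fun _ ⟨_, hc, hv⟩ => mem_inertialSubalgebra_of_lie_eq_smul hc hv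

theorem IsPluperfect.inertialSubalgebra_eq_top (hL : IsPluperfect K L) :
    inertialSubalgebra K L = ⊤ := by
  let I : LieIdeal K L := sSup {J | J.toSubmodule ≤ (inertialSubalgebra K L).toSubmodule}
  have hI : I.toSubmodule ≤ (inertialSubalgebra K L).toSubmodule := by
    rw [LieSubmodule.sSup_toSubmodule]
    exact sSup_le fun _ ⟨_, hJ, hJI⟩ => hJI ▸ hJ
  suffices hI_top : I = ⊤ from eq_top_iff.2 fun x _ => hI (hI_top ▸ LieSubmodule.mem_top x)
  by_contra hI_top
  obtain ⟨e, f, heI, hef, hfe⟩ := hL.exists_isMorozovPair hI_top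
  have hdiag := (hef.map (LieAlgebra.ad K L)).iSup_eigenspace_eq_top (hfe.map (LieAlgebra.ad K L))
  rw [← LieHom.map_lie] at hdiag
  obtain ⟨J, hJ⟩ := exists_lieIdeal_coe_eq_nonzeroWeightSubalgebra hdiag
  have heJ : e ∈ (J : LieSubalgebra K L) := hJ ▸ LieSubalgebra.subset_lieSpan
    ⟨2, two_ne_zero, hef.trans (Nat.cast_smul_eq_nsmul K 2 e).symm⟩
  have hJU : (J : LieSubalgebra K L) ≤ inertialSubalgebra K L :=
    hJ ▸ nonzeroWeightSubalgebra_le_inertialSubalgebra _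
  have hJI : J ≤ I := le_sSup hJU
  exact heI (hJI heJ)

end InertialSubalgebra

end Associative

/-- In characteristic zero, a finite-dimensional pluperfect Lie algebra is inertially
generated. -/
theorem stmt_9 (F L : Type*) [Field F] [CharZero F] [LieRing L] [LieAlgebra F L]
    [FiniteDimensional F L] (hL : IsPluperfect F L) :
    InertiallyGenerated F L := by
  have hspan : ⊤ ≤ Submodule.span F {y : L | IsInertial F y} := fun x _ =>
    hL.inertialSubalgebra_eq_top.ge (LieSubalgebra.mem_top x)
  let b := Module.Basis.ofSpan hspan
  have hb : ∀ i, IsInertial F (b i) := fun i => Module.Basis.ofSpan_subset hspan ⟨i, rfl⟩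
  have := Module.Finite.finite_basis b
  refine ⟨_, b.reindex (Finite.equivFin _), fun i => ?_⟩
  rw [Module.Basis.reindex_apply]
  exact hb _
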